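/- Let θ ∈ ℝ. Define the differential–difference operators φ₁, φ₂ : C¹([0,1],ℂⁿ) → C⁰([0,1],ℂⁿ) × ℂⁿ by φ₁(ζ) = (ζ̇ − T·A(t)·ζ + iθ·ζ, ζ(0) − ζ(1)) and φ₂(ζ) = (ζ̇ + T·A(t)ᵀ·ζ + iθ·ζ, ζ(0) − ζ(1)). Then for every ζ ∈ C¹([0,1],ℂⁿ): (i) ζ lies in the kernel of φ₁ if and only if the pair (ζ, ζ(0)) is orthogonal to φ₂(g) for every g ∈ C¹([0,1],ℂⁿ); and (ii) ζ lies in the kernel of φ₂ if and only if the pair (ζ, ζ(0)) is orthogonal to φ₁(g) for every g ∈ C¹([0,1],ℂⁿ). -/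

import Mathlib

open Matrix Set Complex

/-!
Write `L ζ = ζ' + B ζ` on `[a, b]`. Integrating `(ζᴴ g)'` gives Green's formula
`∫ ζᴴ (g' - Bᴴ g) + ζ(a)ᴴ (g(a) - g(b)) = (ζ(b) - ζ(a))ᴴ g(b) - ∫ (L ζ)ᴴ g`,
whose right-hand side vanishes for all `C¹` functions `g` exactly when `L ζ = 0` (test with
functions `g` supported in the interior) and `ζ(a) = ζ(b)` (test with a constant `g`).
Both parts of the theorem are this equivalence: `g' - Bᴴ g` is again of the form `L`, with
coefficient `-Bᴴ`, and for `B = iθ - T A` with `A` real, `-Bᴴ = iθ + T Aᵀ`.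
-/

open MeasureTheory
open scoped ContDiff

section TestFunctions

variable {E : Type*} [NormedAddCommGroup E] [NormedSpace ℝ E]

theorem eqOn_zero_of_integral_contDiff_smul_eq_zero [CompleteSpace E] {a b : ℝ} (hab : a < b)
    {f : ℝ → E} (hf : ContinuousOn f (Icc a b))
    (h : ∀ φ : ℝ → ℝ, ContDiff ℝ ∞ φ → tsupport φ ⊆ Ioo a b → ∫ t in a..b, φ t • f t = 0) :
    EqOn f 0 (Icc a b) := by
  have hf_Ioo : LocallyIntegrableOn f (Ioo a b) :=
    (hf.mono Ioo_subset_Icc_self).locallyIntegrableOn measurableSet_Ioo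
  have ae_zero : ∀ᵐ t, t ∈ Ioo a b → f t = 0 := by
    refine isOpen_Ioo.ae_eq_zero_of_integral_contDiff_smul_eq_zero hf_Ioo fun φ hφ _ hsupp ↦ ?_
    have support_subset : Function.support (fun t ↦ φ t • f t) ⊆ Ioc a b :=
      (Function.support_smul_subset_left φ f).trans <|
        (subset_tsupport φ).trans <| hsupp.trans Ioo_subset_Ioc_self
    rw [← intervalIntegral.integral_eq_integral_of_support_subset support_subset]
    exact h φ hφ hsupp
  refine Measure.eqOn_Icc_of_ae_eq volume hab.ne ?_ hf continuousOn_const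
  rw [← Measure.restrict_congr_set Ioo_ae_eq_Icc]
  exact (ae_restrict_iff' measurableSet_Ioo).2 ae_zero

end TestFunctions

section Continuity

variable {X ι R : Type*} [TopologicalSpace X] [TopologicalSpace R] {s : Set X}

theorem continuousOn_star_dotProduct [Fintype ι] [NonUnitalNonAssocSemiring R] [ContinuousAdd R]
    [ContinuousMul R] [Star R] [ContinuousStar R] {u v : X → ι → R} (hu : ContinuousOn u s)
    (hv : ContinuousOn v s) : ContinuousOn (fun t ↦ star (u t) ⬝ᵥ v t) s := by
  have continuous_pairing : Continuous fun p : (ι → R) × (ι → R) ↦ star p.1 ⬝ᵥ p.2 :=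
    continuous_fst.star.dotProduct continuous_snd
  exact continuous_pairing.comp_continuousOn (hu.prodMk hv)

theorem continuousOn_neg_conjTranspose {m n : Type*} [Neg R] [ContinuousNeg R] [Star R]
    [ContinuousStar R] {B : X → Matrix m n R} (hB : ContinuousOn B s) :
    ContinuousOn (fun t ↦ -(B t)ᴴ) s :=
  continuous_id.matrix_conjTranspose.neg.comp_continuousOn hB

end Continuity

section StarDotProduct

variable {ι 𝕜 : Type*} [Fintype ι] [RCLike 𝕜]

theorem hasDerivAt_star_dotProduct {u v : ℝ → ι → 𝕜} {u' v' : ι → 𝕜} {t : ℝ}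
    (hu : HasDerivAt u u' t) (hv : HasDerivAt v v' t) :
    HasDerivAt (fun s ↦ star (u s) ⬝ᵥ v s) (star u' ⬝ᵥ v t + star (u t) ⬝ᵥ v') t := by
  simp only [dotProduct, ← Finset.sum_add_distrib]
  exact HasDerivAt.fun_sum fun i _ ↦ (hasDerivAt_pi.1 hu i).star.mul (hasDerivAt_pi.1 hv i)

theorem eqOn_zero_of_integral_star_dotProduct_eq_zero {a b : ℝ} (hab : a < b) {f : ℝ → ι → 𝕜}
    (hf : ContinuousOn f (Icc a b))
    (h : ∀ g : ℝ → ι → 𝕜, ContDiff ℝ ∞ g → g b = 0 → ∫ t in a..b, star (f t) ⬝ᵥ g t = 0) :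
    EqOn f 0 (Icc a b) := by
  have star_dotProduct_eq_zero (v : ι → 𝕜) : EqOn (fun t ↦ star (f t) ⬝ᵥ v) 0 (Icc a b) := by
    refine eqOn_zero_of_integral_contDiff_smul_eq_zero hab
      (continuousOn_star_dotProduct hf continuousOn_const) fun φ hφ hsupp ↦ ?_
    have φ_b : φ b = 0 := image_eq_zero_of_notMem_tsupport fun hb ↦ (hsupp hb).2.false
    simpa only [dotProduct_smul] using
      h (fun t ↦ φ t • v) (hφ.smul contDiff_const) (by simp only [φ_b, zero_smul])
  intro t ht
  open scoped ComplexOrder in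
  exact dotProduct_star_self_eq_zero.1 (star_dotProduct_eq_zero (f t) ht)

theorem integral_star_dotProduct_eq_iff {a b : ℝ} (hab : a < b) {f : ℝ → ι → 𝕜}
    (hf : ContinuousOn f (Icc a b)) (w : ι → 𝕜) :
    (∀ g : ℝ → ι → 𝕜, ContDiffOn ℝ 1 g (Icc a b) →
        ∫ t in a..b, star (f t) ⬝ᵥ g t = star w ⬝ᵥ g b) ↔
      EqOn f 0 (Icc a b) ∧ w = 0 := by
  have integral_eq_zero (hf_zero : EqOn f 0 (Icc a b)) (g : ℝ → ι → 𝕜) :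
      ∫ t in a..b, star (f t) ⬝ᵥ g t = 0 := by
    refine intervalIntegral.integral_zero_ae (.of_forall fun t ht ↦ ?_)
    rw [uIoc_of_le hab.le] at ht
    simp only [hf_zero (Ioc_subset_Icc_self ht), Pi.zero_apply, star_zero, zero_dotProduct]
  constructor
  · intro h
    have hf_zero : EqOn f 0 (Icc a b) :=
      eqOn_zero_of_integral_star_dotProduct_eq_zero hab hf fun g hg hgb ↦ by
        rw [h g (hg.of_le (mod_cast le_top)).contDiffOn, hgb, dotProduct_zero]
    have w_self : star w ⬝ᵥ w = 0 := by
      rw [← h (fun _ ↦ w) contDiffOn_const, integral_eq_zero hf_zero]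
    open scoped ComplexOrder in
    exact ⟨hf_zero, dotProduct_star_self_eq_zero.1 w_self⟩
  · rintro ⟨hf_zero, rfl⟩ g _
    rw [integral_eq_zero hf_zero, star_zero, zero_dotProduct]

end StarDotProduct

section LinearDiffOp

variable {ι 𝕜 : Type*} [Fintype ι] [RCLike 𝕜] {a b : ℝ} {B : ℝ → Matrix ι ι 𝕜} {ζ g : ℝ → ι → 𝕜}

/-- The first-order linear differential operator `ζ ↦ ζ' + B ζ` on `[a, b]`, the first component
of both `φ₁` and `φ₂`. Derivatives at the endpoints are one-sided. -/
noncomputable def linearDiffOp (a b : ℝ) (B : ℝ → Matrix ι ι 𝕜) (ζ : ℝ → ι → 𝕜) (t : ℝ) : ι → 𝕜 :=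
  derivWithin ζ (Icc a b) t + B t *ᵥ ζ t

theorem continuousOn_linearDiffOp (hab : a < b) (hB : ContinuousOn B (Icc a b))
    (hζ : ContDiffOn ℝ 1 ζ (Icc a b)) : ContinuousOn (linearDiffOp a b B ζ) (Icc a b) :=
  (hζ.continuousOn_derivWithin (uniqueDiffOn_Icc hab) le_rfl).add <|
    (continuous_fst.matrix_mulVec continuous_snd).comp_continuousOn (hB.prodMk hζ.continuousOn)

theorem linearDiffOp_lagrange_identity (B : ℝ → Matrix ι ι 𝕜) (ζ g : ℝ → ι → 𝕜) (t : ℝ) :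
    star (linearDiffOp a b B ζ t) ⬝ᵥ g t
        + star (ζ t) ⬝ᵥ linearDiffOp a b (fun t ↦ -(B t)ᴴ) g t =
      star (derivWithin ζ (Icc a b) t) ⬝ᵥ g t + star (ζ t) ⬝ᵥ derivWithin g (Icc a b) t := by
  simp only [linearDiffOp, star_add, add_dotProduct, dotProduct_add, star_mulVec, neg_mulVec,
    dotProduct_neg, dotProduct_mulVec]
  ring

theorem linearDiffOp_green_formula (hab : a < b) (hB : ContinuousOn B (Icc a b))
    (hζ : ContDiffOn ℝ 1 ζ (Icc a b)) (hg : ContDiffOn ℝ 1 g (Icc a b)) :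
    (∫ t in a..b, star (linearDiffOp a b B ζ t) ⬝ᵥ g t)
        + ∫ t in a..b, star (ζ t) ⬝ᵥ linearDiffOp a b (fun t ↦ -(B t)ᴴ) g t =
      star (ζ b) ⬝ᵥ g b - star (ζ a) ⬝ᵥ g a := by
  have intervalIntegrable_star_dotProduct {u v : ℝ → ι → 𝕜} (hu : ContinuousOn u (Icc a b))
      (hv : ContinuousOn v (Icc a b)) :
      IntervalIntegrable (fun t ↦ star (u t) ⬝ᵥ v t) volume a b :=
    (continuousOn_star_dotProduct hu hv).intervalIntegrable_of_Icc hab.le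
  have integrable_left := intervalIntegrable_star_dotProduct
    (continuousOn_linearDiffOp hab hB hζ) hg.continuousOn
  have integrable_right := intervalIntegrable_star_dotProduct hζ.continuousOn
    (continuousOn_linearDiffOp hab (continuousOn_neg_conjTranspose hB) hg)
  have hasDerivAt_interior {u : ℝ → ι → 𝕜} (hu : ContDiffOn ℝ 1 u (Icc a b)) {t : ℝ}
      (ht : t ∈ Ioo a b) : HasDerivAt u (derivWithin u (Icc a b) t) t :=
    (hu.differentiableOn one_ne_zero t (Ioo_subset_Icc_self ht)).hasDerivWithinAt.hasDerivAt
      (Icc_mem_nhds ht.1 ht.2)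
  rw [← intervalIntegral.integral_add integrable_left integrable_right]
  refine intervalIntegral.integral_eq_sub_of_hasDerivAt_of_le hab.le
    (continuousOn_star_dotProduct hζ.continuousOn hg.continuousOn) (fun t ht ↦ ?_)
    (integrable_left.add integrable_right)
  rw [linearDiffOp_lagrange_identity]
  exact hasDerivAt_star_dotProduct (hasDerivAt_interior hζ ht) (hasDerivAt_interior hg ht)

theorem linearDiffOp_periodic_ker_iff_orthogonal (hab : a < b) (hB : ContinuousOn B (Icc a b))
    (hζ : ContDiffOn ℝ 1 ζ (Icc a b)) :
    ((∀ t ∈ Icc a b, linearDiffOp a b B ζ t = 0) ∧ ζ a - ζ b = 0) ↔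
      ∀ g : ℝ → ι → 𝕜, ContDiffOn ℝ 1 g (Icc a b) →
        (∫ t in a..b, star (ζ t) ⬝ᵥ linearDiffOp a b (fun t ↦ -(B t)ᴴ) g t)
          + star (ζ a) ⬝ᵥ (g a - g b) = 0 := by
  have orthogonal_iff (g : ℝ → ι → 𝕜) (hg : ContDiffOn ℝ 1 g (Icc a b)) :
      (∫ t in a..b, star (ζ t) ⬝ᵥ linearDiffOp a b (fun t ↦ -(B t)ᴴ) g t)
          + star (ζ a) ⬝ᵥ (g a - g b) = 0 ↔
        ∫ t in a..b, star (linearDiffOp a b B ζ t) ⬝ᵥ g t = star (ζ b - ζ a) ⬝ᵥ g b := by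
    rw [← sub_eq_zero (b := star (ζ b - ζ a) ⬝ᵥ g b), ← neg_eq_zero, star_sub, sub_dotProduct,
      dotProduct_sub]
    congr! 1
    linear_combination -linearDiffOp_green_formula hab hB hζ hg
  rw [forall₂_congr orthogonal_iff,
    integral_star_dotProduct_eq_iff hab (continuousOn_linearDiffOp hab hB hζ), sub_eq_zero,
    sub_eq_zero, eq_comm (a := ζ a)]
  rfl

theorem kernel_orthogonality_periodic_complex_general (hab : a < b)
    (hB : ContinuousOn B (Icc a b)) (hζ : ContDiffOn ℝ 1 ζ (Icc a b)) :
    (((∀ t ∈ Icc a b, linearDiffOp a b B ζ t = 0) ∧ ζ a - ζ b = 0) ↔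
      ∀ g : ℝ → ι → 𝕜, ContDiffOn ℝ 1 g (Icc a b) →
        (∫ t in a..b, star (ζ t) ⬝ᵥ linearDiffOp a b (fun t ↦ -(B t)ᴴ) g t)
          + star (ζ a) ⬝ᵥ (g a - g b) = 0) ∧
    (((∀ t ∈ Icc a b, linearDiffOp a b (fun t ↦ -(B t)ᴴ) ζ t = 0) ∧ ζ a - ζ b = 0) ↔
      ∀ g : ℝ → ι → 𝕜, ContDiffOn ℝ 1 g (Icc a b) →
        (∫ t in a..b, star (ζ t) ⬝ᵥ linearDiffOp a b B g t)
          + star (ζ a) ⬝ᵥ (g a - g b) = 0) := by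
  refine ⟨linearDiffOp_periodic_ker_iff_orthogonal hab hB hζ, ?_⟩
  simpa only [conjTranspose_neg, conjTranspose_conjTranspose, neg_neg] using
    linearDiffOp_periodic_ker_iff_orthogonal hab (continuousOn_neg_conjTranspose hB) hζ

end LinearDiffOp

section FloquetCoeff

variable {ι : Type*} [DecidableEq ι]

/-- The coefficient matrix `iθ - T A` of `φ₁`, for a real matrix `A`; that of `φ₂` is the negative
of its conjugate transpose. -/
noncomputable def floquetCoeff (T θ : ℝ) (A : Matrix ι ι ℝ) : Matrix ι ι ℂ :=
  ((θ : ℂ) * I) • (1 : Matrix ι ι ℂ) - (T : ℂ) • A.map (fun r ↦ (r : ℂ))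

theorem continuous_floquetCoeff (T θ : ℝ) :
    Continuous (floquetCoeff T θ : Matrix ι ι ℝ → Matrix ι ι ℂ) :=
  continuous_const.sub ((continuous_id.matrix_map continuous_ofReal).const_smul (T : ℂ))

theorem neg_conjTranspose_floquetCoeff (T θ : ℝ) (A : Matrix ι ι ℝ) :
    -(floquetCoeff T θ A)ᴴ = floquetCoeff (-T) θ Aᵀ := by
  have conjTranspose_map_ofReal :
      (A.map (fun r ↦ (r : ℂ)))ᴴ = Aᵀ.map (fun r ↦ (r : ℂ)) := by
    ext i j
    exact conj_ofReal (A j i)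
  simp only [floquetCoeff, conjTranspose_sub, conjTranspose_smul, conjTranspose_one,
    conjTranspose_map_ofReal, star_mul', star_def, conj_ofReal, conj_I, ofReal_neg]
  module

theorem linearDiffOp_floquetCoeff [Fintype ι] {a b : ℝ} (T θ : ℝ) (A : ℝ → Matrix ι ι ℝ)
    (ζ : ℝ → ι → ℂ) (t : ℝ) :
    linearDiffOp a b (fun t ↦ floquetCoeff T θ (A t)) ζ t =
      derivWithin ζ (Icc a b) t - (T : ℂ) • ((A t).map (fun r ↦ (r : ℂ)) *ᵥ ζ t)
        + ((θ : ℂ) * I) • ζ t := by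
  simp only [linearDiffOp, floquetCoeff, sub_mulVec, smul_mulVec, one_mulVec]
  abel

end FloquetCoeff

/-- Proposition 3 of the paper: the complex differential–difference operators
`φ₁(ζ) = (ζ̇ − T·A(t)·ζ + iθ·ζ, ζ(0) − ζ(1))` and
`φ₂(ζ) = (ζ̇ + T·A(t)ᵀ·ζ + iθ·ζ, ζ(0) − ζ(1))` on `C¹([0,1],ℂⁿ)` satisfy:
`ζ ∈ Ker φ₁` iff `(ζ, ζ(0))` is orthogonal (for the Hermitian inner product,
conjugate-linear in the first argument) to the range of `φ₂`, and `ζ ∈ Ker φ₂`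
iff `(ζ, ζ(0))` is orthogonal to the range of `φ₁`. -/
theorem kernel_orthogonality_periodic_complex (n : ℕ) (T : ℝ) (hT : 0 < T) (θ : ℝ)
    (A : ℝ → Matrix (Fin n) (Fin n) ℝ) (hA : ContinuousOn A (Icc 0 1))
    (ζ : ℝ → Fin n → ℂ) (hζ : ContDiffOn ℝ 1 ζ (Icc 0 1)) :
    ((((∀ t ∈ Icc (0:ℝ) 1,
          derivWithin ζ (Icc 0 1) t - (T : ℂ) • ((A t).map (fun r => (r : ℂ)) *ᵥ ζ t)
            + ((θ : ℂ) * Complex.I) • ζ t = 0) ∧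
        ζ 0 - ζ 1 = 0) ↔
      ∀ g : ℝ → Fin n → ℂ, ContDiffOn ℝ 1 g (Icc 0 1) →
        (∫ t in (0:ℝ)..1,
            star (ζ t) ⬝ᵥ (derivWithin g (Icc 0 1) t
              + (T : ℂ) • ((A t)ᵀ.map (fun r => (r : ℂ)) *ᵥ g t)
              + ((θ : ℂ) * Complex.I) • g t)) +
          star (ζ 0) ⬝ᵥ (g 0 - g 1) = 0) ∧
     (((∀ t ∈ Icc (0:ℝ) 1,
          derivWithin ζ (Icc 0 1) t + (T : ℂ) • ((A t)ᵀ.map (fun r => (r : ℂ)) *ᵥ ζ t)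
            + ((θ : ℂ) * Complex.I) • ζ t = 0) ∧
        ζ 0 - ζ 1 = 0) ↔
      ∀ g : ℝ → Fin n → ℂ, ContDiffOn ℝ 1 g (Icc 0 1) →
        (∫ t in (0:ℝ)..1,
            star (ζ t) ⬝ᵥ (derivWithin g (Icc 0 1) t
              - (T : ℂ) • ((A t).map (fun r => (r : ℂ)) *ᵥ g t)
              + ((θ : ℂ) * Complex.I) • g t)) +
          star (ζ 0) ⬝ᵥ (g 0 - g 1) = 0)) := by
  simpa only [neg_conjTranspose_floquetCoeff, linearDiffOp_floquetCoeff, ofReal_neg, neg_smul,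
    sub_neg_eq_add] using kernel_orthogonality_periodic_complex_general zero_lt_one
      ((continuous_floquetCoeff T θ).comp_continuousOn' hA) hζ
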